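/- Let τ be the unique positive real with τ·Ω''(τ) = 1 and Λ := Ψ(τ), and let λ satisfy Λ < λ < 1. Let ζ be the unique positive real with Ψ(ζ) = λ (so τ < ζ). Then ( (1−Λ)/(1−λ) )^{1−λ} · e^{Λ−λ} · (ζ/τ)^{λ} · exp( Ω(τ)/τ − Ω(ζ)/ζ ) < 1. Moreover ζ·Ω''(ζ) > 1, while for λ < Λ one has ζ·Ω''(ζ) < 1 and for λ = Λ one has ζ·Ω''(ζ) = 1 (the expected excess degree criterion for the birth of the giant component). -/

import Mathlib

/-- `Ω(z) = ∑_{t≥2} ω_t z^t / t!`. -/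
noncomputable def Om (ω : ℕ → ℝ) (z : ℝ) : ℝ := ∑' t : ℕ, ω t * z ^ t / t.factorial

/-- `Ψ(z) = Ω'(z) − Ω(z)/z`. -/
noncomputable def Psi (ω : ℕ → ℝ) (z : ℝ) : ℝ := deriv (Om ω) z - Om ω z / z

theorem om_summable (a : ℕ → ℝ) (C : ℝ) (hC : ∀ t, |a t| ≤ C) (z : ℝ) :
    Summable (fun t : ℕ => a t * z ^ t / t.factorial) := by
  have h := (Real.summable_pow_div_factorial |z|).mul_left C
  refine Summable.of_norm_bounded h (fun t => ?_)
  rw [Real.norm_eq_abs, abs_div, abs_mul, abs_pow, Nat.abs_cast, mul_div_assoc]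
  exact mul_le_mul_of_nonneg_right (hC t) (by positivity)

theorem om_hasDerivAt (a : ℕ → ℝ) (C : ℝ) (hC : ∀ t, |a t| ≤ C) (z : ℝ) :
    HasDerivAt (Om a) (Om (fun t => a (t + 1)) z) z := by
  have key : ∀ t : ℕ, ∀ y : ℝ, a (t + 1) * ((t + 1 : ℕ) * y ^ t) / (t + 1).factorial
      = a (t + 1) * y ^ t / t.factorial := by
    intro t y
    rw [Nat.factorial_succ]
    have : (t.factorial : ℝ) ≠ 0 := by positivity
    push_cast
    field_simp
  have hC0 : 0 ≤ C := (abs_nonneg _).trans (hC 0)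
  have hu : Summable (fun t : ℕ => C * (|z| + 1) ^ t / t.factorial) :=
    om_summable (fun _ => C) C (fun _ => (abs_of_nonneg hC0).le) (|z| + 1)
  have h := hasDerivAt_tsum_of_isPreconnected
    (g := fun (t : ℕ) (y : ℝ) => a (t + 1) * y ^ (t + 1) / (t + 1).factorial)
    (g' := fun (t : ℕ) (y : ℝ) => a (t + 1) * y ^ t / t.factorial)
    (t := Metric.ball (0 : ℝ) (|z| + 1)) (y₀ := z) (y := z)
    hu Metric.isOpen_ball (convex_ball _ _).isPreconnected
    (by
      intro t y _
      have := ((hasDerivAt_pow (t + 1) y).const_mul (a (t + 1))).div_const ((t + 1).factorial : ℝ)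
      rw [← key]
      simpa using this)
    (by
      intro t y hy
      have hy' : |y| ≤ |z| + 1 := by
        have := mem_ball_zero_iff.1 hy
        rw [Real.norm_eq_abs] at this
        exact this.le
      rw [Real.norm_eq_abs, abs_div, abs_mul, abs_pow, Nat.abs_cast]
      have := hC (t + 1)
      gcongr)
    (by simp)
    ((summable_nat_add_iff 1).2 (om_summable a C hC z))
    (by simp)
  have hfun : Om a = fun y => a 0 + ∑' t : ℕ, a (t + 1) * y ^ (t + 1) / (t + 1).factorial := by
    funext y
    unfold Om
    rw [(om_summable a C hC y).tsum_eq_zero_add]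
    simp
  rw [hfun]
  exact h.const_add (a 0)

theorem om_nonneg (a : ℕ → ℝ) (ha : ∀ t, 0 ≤ a t) (z : ℝ) (hz : 0 ≤ z) : 0 ≤ Om a z :=
  tsum_nonneg (fun t => by have := ha t; positivity)

theorem om_pos (a : ℕ → ℝ) (ha : ∀ t, 0 ≤ a t) (C : ℝ) (hC : ∀ t, |a t| ≤ C)
    (hnz : ∃ t, a t ≠ 0) (z : ℝ) (hz : 0 < z) : 0 < Om a z := by
  obtain ⟨i, hi⟩ := hnz
  have hi' : 0 < a i := lt_of_le_of_ne (ha i) (Ne.symm hi)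
  exact (om_summable a C hC z).tsum_pos (fun t => by have := ha t; positivity) i (by positivity)

theorem om_mono (a : ℕ → ℝ) (ha : ∀ t, 0 ≤ a t) (C : ℝ) (hC : ∀ t, |a t| ≤ C)
    (x y : ℝ) (hx : 0 ≤ x) (hxy : x ≤ y) : Om a x ≤ Om a y := by
  refine (om_summable a C hC x).tsum_le_tsum (fun t => ?_) (om_summable a C hC y)
  have := ha t
  gcongr

theorem stmt19 (ω : ℕ → ℝ)
    (hnonneg : ∀ t, 0 ≤ ω t) (hbdd : ∃ C, ∀ t, ω t ≤ C)
    (h0 : ω 0 = 0) (h1 : ω 1 = 0) (hnz : ∃ t, ω t ≠ 0)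
    (τ : ℝ) (hτpos : 0 < τ) (hτ : τ * deriv (deriv (Om ω)) τ = 1)
    (Λ : ℝ) (hΛ : Λ = Psi ω τ)
    (lam : ℝ) (hΛlam : Λ < lam) (hlam1 : lam < 1)
    (ζ : ℝ) (hζpos : 0 < ζ) (hζ : Psi ω ζ = lam) :
    τ < ζ ∧
    ((1 - Λ) / (1 - lam)) ^ (1 - lam) * Real.exp (Λ - lam) * (ζ / τ) ^ lam *
        Real.exp (Om ω τ / τ - Om ω ζ / ζ) < 1 ∧
    1 < ζ * deriv (deriv (Om ω)) ζ ∧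
    (∀ lam' ζ' : ℝ, 0 < lam' → lam' < Λ → 0 < ζ' → Psi ω ζ' = lam' →
      ζ' * deriv (deriv (Om ω)) ζ' < 1) ∧
    (∀ ζ' : ℝ, 0 < ζ' → Psi ω ζ' = Λ → ζ' * deriv (deriv (Om ω)) ζ' = 1) := by
  obtain ⟨C, hC'⟩ := hbdd
  have hC : ∀ t, |ω t| ≤ C := fun t => by rw [abs_of_nonneg (hnonneg t)]; exact hC' t
  set A : ℝ → ℝ := Om ω with hA
  set B : ℝ → ℝ := Om (fun t => ω (t + 1)) with hB
  set D : ℝ → ℝ := Om (fun t => ω (t + 2)) with hD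
  set E : ℝ → ℝ := Om (fun t => ω (t + 3)) with hE
  have dA : ∀ z, HasDerivAt A (B z) z := om_hasDerivAt ω C hC
  have dB : ∀ z, HasDerivAt B (D z) z := om_hasDerivAt (fun t => ω (t + 1)) C (fun t => hC _)
  have dD : ∀ z, HasDerivAt D (E z) z := om_hasDerivAt (fun t => ω (t + 2)) C (fun t => hC _)
  have e1 : deriv A = B := funext fun z => (dA z).deriv
  have e2 : deriv B = D := funext fun z => (dB z).deriv
  have hPsi : Psi ω = fun z => B z - A z / z := by
    funext z; unfold Psi; rw [← hA, e1]
  rw [e1, e2] at hτ ⊢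
  have Dpos : ∀ z, 0 < z → 0 < D z := by
    refine om_pos _ (fun t => hnonneg _) C (fun t => hC _) ?_
    obtain ⟨t, ht⟩ := hnz
    match t, ht with
    | 0, ht => exact absurd h0 ht
    | 1, ht => exact absurd h1 ht
    | t + 2, ht => exact ⟨t, ht⟩
  have Enn : ∀ z, 0 ≤ z → 0 ≤ E z := om_nonneg _ (fun t => hnonneg _)
  have Dmono : ∀ x y, 0 < x → x < y → x * D x < y * D y := by
    intro x y hx hxy
    have h := om_mono (fun t => ω (t + 2)) (fun t => hnonneg _) C (fun t => hC _) x y hx.le hxy.le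
    calc x * D x < y * D x := mul_lt_mul_of_pos_right hxy (Dpos x hx)
      _ ≤ y * D y := mul_le_mul_of_nonneg_left h (hx.trans hxy).le
  have A0 : A 0 = 0 := by
    rw [hA]; unfold Om
    rw [tsum_eq_single 0]
    · simp [h0]
    · intro t ht; simp [ht]
  have Fpos : ∀ z, 0 < z → 0 < z ^ 2 * D z - z * B z + A z := by
    have dF : ∀ z, HasDerivAt (fun z => z ^ 2 * D z - z * B z + A z) (z * D z + z ^ 2 * E z) z := by
      intro z
      have := ((((hasDerivAt_id z).pow 2).mul (dD z)).sub ((hasDerivAt_id z).mul (dB z))).add (dA z)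
      refine (this.congr_deriv ?_)
      simp; ring
    have hmono : StrictMonoOn (fun z => z ^ 2 * D z - z * B z + A z) (Set.Ici 0) := by
      refine strictMonoOn_of_deriv_pos (convex_Ici 0)
        (fun z _ => (dF z).continuousAt.continuousWithinAt) ?_
      intro z hz
      rw [interior_Ici] at hz
      have hz' : 0 < z := hz
      rw [(dF z).deriv]
      have := Dpos z hz'
      have := Enn z hz'.le
      positivity
    intro z hz
    have := hmono (Set.mem_Ici.2 le_rfl) (Set.mem_Ici.2 hz.le) hz
    simpa [A0] using this
  set P : ℝ → ℝ := fun z => B z - A z / z with hP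
  rw [hPsi] at hΛ hζ ⊢
  have dQ : ∀ z, 0 < z → HasDerivAt (fun z => A z / z) (P z / z) z := by
    intro z hz
    refine ((dA z).div (hasDerivAt_id z) hz.ne').congr_deriv ?_
    simp only [hP, id]
    field_simp
  have dP : ∀ z, 0 < z → HasDerivAt P (D z - P z / z) z := fun z hz => (dB z).sub (dQ z hz)
  have dPpos : ∀ z, 0 < z → 0 < D z - P z / z := by
    intro z hz
    have : D z - P z / z = (z ^ 2 * D z - z * B z + A z) / z ^ 2 := by
      simp only [hP]; field_simp; ring
    rw [this]
    exact div_pos (Fpos z hz) (by positivity)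
  have Pmono : StrictMonoOn P (Set.Ioi 0) := by
    refine strictMonoOn_of_deriv_pos (convex_Ioi 0)
      (fun z hz => (dP z hz).continuousAt.continuousWithinAt) ?_
    intro z hz
    rw [interior_Ioi] at hz
    rw [(dP z hz).deriv]
    exact dPpos z hz
  have hτζ : τ < ζ := (Pmono.lt_iff_lt hτpos hζpos).1 (by rw [hζ, ← hΛ]; exact hΛlam)
  refine ⟨hτζ, ?_, ?_, ?_, ?_⟩
  · have Plt : ∀ z, τ ≤ z → z ≤ ζ → P z < 1 := by
      intro z h h'
      have := Pmono.monotoneOn (Set.mem_Ioi.2 (hτpos.trans_le h)) (Set.mem_Ioi.2 hζpos) h'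
      linarith
    have hmH : StrictAntiOn (fun z => z * (1 - P z)) (Set.Ici τ) := by
      have dH : ∀ z, 0 < z → HasDerivAt (fun z => z * (1 - P z)) (1 - z * D z) z := by
        intro z hz
        refine ((hasDerivAt_id z).mul ((dP z hz).const_sub 1)).congr_deriv ?_
        simp only [id]
        field_simp; ring
      refine strictAntiOn_of_deriv_neg (convex_Ici τ)
        (fun z hz => (dH z (hτpos.trans_le hz)).continuousAt.continuousWithinAt) ?_
      intro z hz
      rw [interior_Ici] at hz
      have hz' : τ < z := hz
      rw [(dH z (hτpos.trans hz')).deriv]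
      have := Dmono τ z hτpos hz'
      linarith
    have hmG : StrictAntiOn (fun z => (1 - P z) * (Real.log (1 - Λ) - Real.log (1 - P z)) + (Λ - P z)
        + P z * (Real.log z - Real.log τ) + (A τ / τ - A z / z)) (Set.Icc τ ζ) := by
      have dG : ∀ z, τ ≤ z → z ≤ ζ → HasDerivAt
          (fun z => (1 - P z) * (Real.log (1 - Λ) - Real.log (1 - P z)) + (Λ - P z)
            + P z * (Real.log z - Real.log τ) + (A τ / τ - A z / z))
          ((D z - P z / z) * (Real.log (1 - P z) + Real.log z - (Real.log (1 - Λ) + Real.log τ))) z := by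
        intro z hz hz'
        have hz0 : 0 < z := hτpos.trans_le hz
        have h1P : 1 - P z ≠ 0 := by have := Plt z hz hz'; linarith
        have d1 := (dP z hz0).const_sub 1
        have d2 := (d1.log h1P).const_sub (Real.log (1 - Λ))
        have d3 := ((Real.hasDerivAt_log hz0.ne').sub_const (Real.log τ))
        have := (((d1.mul d2).add ((dP z hz0).const_sub Λ)).add ((dP z hz0).mul d3)).add
          ((dQ z hz0).const_sub (A τ / τ))
        refine this.congr_deriv ?_
        field_simp
        ring
      refine strictAntiOn_of_deriv_neg (convex_Icc τ ζ)
        (fun z hz => (dG z hz.1 hz.2).continuousAt.continuousWithinAt) ?_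
      intro z hz
      rw [interior_Icc] at hz
      obtain ⟨hz1, hz2⟩ := hz
      have hz0 : 0 < z := hτpos.trans hz1
      rw [(dG z hz1.le hz2.le).deriv]
      refine mul_neg_of_pos_of_neg (dPpos z hz0) ?_
      have hp := Plt z hz1.le hz2.le
      rw [← Real.log_mul (by linarith) hz0.ne', ← Real.log_mul (by linarith) hτpos.ne', sub_neg]
      refine Real.log_lt_log (mul_pos (by linarith) hz0) ?_
      have := hmH (Set.mem_Ici.2 le_rfl) (Set.mem_Ici.2 hz1.le) hz1
      simp only [← hΛ] at this
      linarith
    have hG := hmG (Set.left_mem_Icc.2 hτζ.le) (Set.right_mem_Icc.2 hτζ.le) hτζ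
    simp only [← hΛ, hζ] at hG
    have hq : 0 < (1 - Λ) / (1 - lam) := div_pos (by linarith) (by linarith)
    rw [Real.rpow_def_of_pos hq, Real.rpow_def_of_pos (div_pos hζpos hτpos),
      ← Real.exp_add, ← Real.exp_add, ← Real.exp_add, Real.exp_lt_one_iff,
      Real.log_div (by linarith) (by linarith), Real.log_div hζpos.ne' hτpos.ne']
    linarith
  · have := Dmono τ ζ hτpos hτζ
    linarith
  · intro l z _ hl hz hzl
    have : z < τ := (Pmono.lt_iff_lt hz hτpos).1 (by rw [hzl, ← hΛ]; exact hl)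
    have := Dmono z τ hz this
    linarith
  · intro z hz hzl
    have : z = τ := Pmono.injOn hz hτpos (by rw [hzl, hΛ])
    rw [this, hτ]
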